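/- If ζ = q_0 q_1 ⋯ q_{m−1} is a root of unity, then Z_gr(E(Λ_q)) is a commutative K-algebra, it is finitely generated as a K-algebra, and its Krull dimension equals 2. -/

import Mathlib

open scoped BigOperators

noncomputable section

/-- Generators of the path algebra: trivial paths `e i`, arrows `a i : i → i+1`
and `abar i : i+1 → i`. -/
inductive Gen (m : ℕ) : Type
  | e : ZMod m → Gen m
  | a : ZMod m → Gen m
  | abar : ZMod m → Gen m

/-- The free associative algebra on the generators. -/
abbrev FA (K : Type) [Field K] (m : ℕ) : Type := FreeAlgebra K (Gen m)

def Ee (K : Type) [Field K] (m : ℕ) (i : ZMod m) : FA K m := FreeAlgebra.ι K (Gen.e i)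
def Aa (K : Type) [Field K] (m : ℕ) (i : ZMod m) : FA K m := FreeAlgebra.ι K (Gen.a i)
def Bb (K : Type) [Field K] (m : ℕ) (i : ZMod m) : FA K m := FreeAlgebra.ι K (Gen.abar i)

/-- The defining relations of the path algebra KQ. -/
inductive PathRel (K : Type) [Field K] (m : ℕ) [NeZero m] : FA K m → FA K m → Prop
  | orth : ∀ i j : ZMod m, i ≠ j → PathRel K m (Ee K m i * Ee K m j) 0
  | idem : ∀ i : ZMod m, PathRel K m (Ee K m i * Ee K m i) (Ee K m i)
  | total : PathRel K m (∑ i : ZMod m, Ee K m i) 1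
  | asrc : ∀ i : ZMod m, PathRel K m (Ee K m i * Aa K m i) (Aa K m i)
  | atgt : ∀ i : ZMod m, PathRel K m (Aa K m i * Ee K m (i + 1)) (Aa K m i)
  | bsrc : ∀ i : ZMod m, PathRel K m (Ee K m (i + 1) * Bb K m i) (Bb K m i)
  | btgt : ∀ i : ZMod m, PathRel K m (Bb K m i * Ee K m i) (Bb K m i)

/-- The path algebra KQ. -/
abbrev PathAlg (K : Type) [Field K] (m : ℕ) [NeZero m] : Type := RingQuot (PathRel K m)

def pe (K : Type) [Field K] (m : ℕ) [NeZero m] (i : ZMod m) : PathAlg K m :=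
  RingQuot.mkAlgHom K (PathRel K m) (Ee K m i)
def pa (K : Type) [Field K] (m : ℕ) [NeZero m] (i : ZMod m) : PathAlg K m :=
  RingQuot.mkAlgHom K (PathRel K m) (Aa K m i)
def pb (K : Type) [Field K] (m : ℕ) [NeZero m] (i : ZMod m) : PathAlg K m :=
  RingQuot.mkAlgHom K (PathRel K m) (Bb K m i)

/-- The relations defining the Koszul dual (Ext algebra) of `Λ_q`:
`q_i⁻¹ a_i ā_i + ā_{i-1} a_{i-1} = 0`. -/
inductive ExtRel (K : Type) [Field K] (m : ℕ) [NeZero m] (q : ZMod m → K) :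
    PathAlg K m → PathAlg K m → Prop
  | rel : ∀ i : ZMod m,
      ExtRel K m q ((q i)⁻¹ • (pa K m i * pb K m i) + pb K m (i - 1) * pa K m (i - 1)) 0

/-- The Ext algebra `E(Λ_q)`. -/
abbrev ExtAlg (K : Type) [Field K] (m : ℕ) [NeZero m] (q : ZMod m → K) : Type :=
  RingQuot (ExtRel K m q)

def xe (K : Type) [Field K] (m : ℕ) [NeZero m] (q : ZMod m → K) (i : ZMod m) :
    ExtAlg K m q := RingQuot.mkAlgHom K (ExtRel K m q) (pe K m i)
def xa (K : Type) [Field K] (m : ℕ) [NeZero m] (q : ZMod m → K) (i : ZMod m) :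
    ExtAlg K m q := RingQuot.mkAlgHom K (ExtRel K m q) (pa K m i)
def xb (K : Type) [Field K] (m : ℕ) [NeZero m] (q : ZMod m → K) (i : ZMod m) :
    ExtAlg K m q := RingQuot.mkAlgHom K (ExtRel K m q) (pb K m i)

/-- `γ_i^n`, the image of the path `a_i a_{i+1} ⋯ a_{i+n-1}` in `E(Λ_q)`. -/
def gam (K : Type) [Field K] (m : ℕ) [NeZero m] (q : ZMod m → K) (i : ZMod m) :
    ℕ → ExtAlg K m q
  | 0 => xe K m q i
  | n + 1 => xa K m q i * gam K m q (i + 1) n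

/-- `δ_i^n`, the image of the path `ā_{i+n-1} ⋯ ā_{i+1} ā_i` in `E(Λ_q)`. -/
def del (K : Type) [Field K] (m : ℕ) [NeZero m] (q : ZMod m → K) (i : ZMod m) :
    ℕ → ExtAlg K m q
  | 0 => xe K m q i
  | n + 1 => xb K m q (i + (n : ZMod m)) * del K m q i n

/-- Homogeneity of path-length degree `n` in `E(Λ_q)`: membership in the span of
the (images of) paths of length `n`, i.e. of the monomials `γ_i^s δ_j^t` with `s + t = n`. -/
def Homog (K : Type) [Field K] (m : ℕ) [NeZero m] (q : ZMod m → K) (n : ℕ)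
    (z : ExtAlg K m q) : Prop :=
  z ∈ Submodule.span K
    {x : ExtAlg K m q | ∃ (i j : ZMod m) (s t : ℕ), s + t = n ∧ x = gam K m q i s * del K m q j t}

/-- The graded centre of `E(Λ_q)`: the subalgebra generated by all homogeneous elements `z`
of degree `n` such that `z g = (-1)^{n n'} g z` for all homogeneous `g` of degree `n'`. -/
def ZGr (K : Type) [Field K] (m : ℕ) [NeZero m] (q : ZMod m → K) :
    Subalgebra K (ExtAlg K m q) :=
  Algebra.adjoin K
    {z : ExtAlg K m q | ∃ n : ℕ, Homog K m q n z ∧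
      ∀ (n' : ℕ) (g : ExtAlg K m q), Homog K m q n' g →
        z * g = ((-1 : K) ^ (n * n')) • (g * z)}

/-- The product `q_k q_{k+1} ⋯ q_{k+len-1}` (subscripts modulo `m`). -/
def qblock (K : Type) [Field K] (m : ℕ) [NeZero m] (q : ZMod m → K) (k len : ℕ) : K :=
  ∏ j ∈ Finset.range len, q ((k + j : ℕ) : ZMod m)

/-- The coefficient `∏_{k=1}^{i} (q_k ⋯ q_{k+len-1})⁻¹`. -/
def wcoef (K : Type) [Field K] (m : ℕ) [NeZero m] (q : ZMod m → K) (i len : ℕ) : K :=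
  ∏ k ∈ Finset.Icc 1 i, (qblock K m q k len)⁻¹

/-! The monomials `γ_i^s δ_j^t` span `E(Λ_q)`, and they are linearly independent because the scalars
arising from `ā a = -q⁻¹ a ā` define a left regular representation on the free module they index.
A homogeneous graded-central element commutes with the vertex idempotents, so it is a combination of
closed paths; in odd degree it anticommutes with each of these, which makes it vanish unless
`2 = 0` in `K`. Hence `Z_gr` is commutative. If `ζ^n = 1` and `N = 2mn`, then `X = ∑ γ_i^N` and
`Y = ∑ δ_i^N` are central of even degree and algebraically independent, and `E(Λ_q)` is finite over
`K[X, Y]`, with generators the monomials of exponents `s, t < N`. So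
`K[X, Y] ⊆ Z_gr ⊆ E(Λ_q)` exhibits `Z_gr` as a finite extension of a polynomial ring in two
variables. -/

section CommutativeAlgebra

theorem ringKrullDim_eq_of_isIntegral {R S : Type*} [CommRing R] [CommRing S] [Algebra R S]
    [Algebra.IsIntegral R S] [FaithfulSMul R S] : ringKrullDim S = ringKrullDim R := by
  refine le_antisymm (Order.krullDim_le_of_strictMono (PrimeSpectrum.comap (algebraMap R S))
    fun P Q hPQ => Ideal.IsIntegral.comap_lt_comap (R := R) hPQ) ?_
  refine iSup_le fun chain => ?_
  obtain ⟨P, hPprime, hPover⟩ := Ideal.nonempty_primesOver (S := S) chain.head.asIdeal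
  obtain ⟨lifted, hlength, -⟩ := Ideal.exists_ltSeries_of_hasGoingUp chain P
  exact hlength ▸ le_iSup (fun c : LTSeries (PrimeSpectrum S) => (c.length : WithBot ℕ∞)) lifted

variable {R ι : Type*} [CommRing R]

theorem algebraicIndependent_of_linearIndependent_monomials {Z : Type*} [CommRing Z] [Algebra R Z]
    {x : ι → Z} (hx : LinearIndependent R fun d : ι →₀ ℕ => d.prod fun i k => x i ^ k) :
    AlgebraicIndependent R x := by
  have aeval_eq : (MvPolynomial.aeval x).toLinearMap =
      Finsupp.linearCombination R (fun d : ι →₀ ℕ => d.prod fun i k => x i ^ k) ∘ₗ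
        (MvPolynomial.basisMonomials ι R).repr := by
    refine (MvPolynomial.basisMonomials ι R).ext fun d => ?_
    rw [LinearMap.comp_apply, LinearEquiv.coe_coe, Module.Basis.repr_self]
    simp [MvPolynomial.aeval_monomial]
  rw [algebraicIndependent_iff_injective_aeval, ← AlgHom.coe_toLinearMap, aeval_eq]
  exact hx.finsuppLinearCombination_injective.comp (LinearEquiv.injective _)

variable [Finite ι]

theorem finiteType_of_finite_adjoin {Z : Type*} [CommRing Z] [Algebra R Z] (x : ι → Z)
    [Module.Finite (Algebra.adjoin R (Set.range x)) Z] : Algebra.FiniteType R Z :=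
  have : Algebra.FiniteType R (Algebra.adjoin R (Set.range x)) :=
    .adjoin_of_finite (Set.finite_range x)
  .trans this inferInstance

variable [IsNoetherianRing R]

theorem ringKrullDim_eq_add_natCard_of_finite_adjoin {Z : Type*} [CommRing Z] [Algebra R Z]
    {x : ι → Z} (hx : AlgebraicIndependent R x)
    [Module.Finite (Algebra.adjoin R (Set.range x)) Z] :
    ringKrullDim Z = ringKrullDim R + Nat.card ι := by
  rw [ringKrullDim_eq_of_isIntegral (R := Algebra.adjoin R (Set.range x)),
    ← ringKrullDim_eq_of_ringEquiv hx.aevalEquiv.toRingEquiv,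
    MvPolynomial.ringKrullDim_of_isNoetherianRing]

open scoped IsMulCommutative in
theorem finite_adjoin_subalgebra {A : Type*} [Ring A] [Algebra R A] (Z : Subalgebra R A)
    [IsMulCommutative Z] (x : ι → Z) [Module.Finite (Algebra.adjoin R (Set.range x)) A] :
    Module.Finite (Algebra.adjoin R (Set.range x)) Z := by
  have : Algebra.FiniteType R (Algebra.adjoin R (Set.range x)) :=
    .adjoin_of_finite (Set.finite_range x)
  have : IsNoetherianRing (Algebra.adjoin R (Set.range x)) :=
    Algebra.FiniteType.isNoetherianRing R _
  let incl : Z →ₗ[Algebra.adjoin R (Set.range x)] A :=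
    { toFun := (↑), map_add' := fun _ _ => rfl, map_smul' := fun _ _ => rfl }
  exact Module.Finite.of_injective incl Subtype.val_injective

end CommutativeAlgebra

namespace ExtAlg

variable {K : Type} [Field K] {m : ℕ}

section SwapCoeff

variable (q : ZMod m → K)

/-- The scalar by which `δ_i^t` and `γ_i^s` commute in `E(Λ_q)`:
`δ_i^t γ_i^s = swapCoeff q i s t • γ_{i+t}^s δ_{i+s}^t`. Each of the `s * t` transpositions
`ā_{j-1} a_{j-1} = -q_j⁻¹ a_j ā_j` contributes one factor. -/
def swapCoeff (i : ZMod m) (s t : ℕ) : K :=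
  ∏ k ∈ Finset.range t, ∏ l ∈ Finset.range s, -(q (i + 1 + k + l))⁻¹

theorem swapCoeff_comm (i : ZMod m) (s t : ℕ) : swapCoeff q i s t = swapCoeff q i t s := by
  rw [swapCoeff, Finset.prod_comm]
  simp only [swapCoeff, add_right_comm]

@[simp]
theorem swapCoeff_zero_right (i : ZMod m) (s : ℕ) : swapCoeff q i s 0 = 1 := by
  simp [swapCoeff]

@[simp]
theorem swapCoeff_zero_left (i : ZMod m) (t : ℕ) : swapCoeff q i 0 t = 1 := by
  simp [swapCoeff]

theorem swapCoeff_one_one (i : ZMod m) : swapCoeff q i 1 1 = -(q (i + 1))⁻¹ := by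
  simp [swapCoeff]

theorem swapCoeff_add_right (i : ZMod m) (s t t' : ℕ) :
    swapCoeff q i s (t + t') = swapCoeff q i s t * swapCoeff q (i + t) s t' := by
  simp only [swapCoeff, Finset.prod_range_add]
  push_cast
  ring_nf

theorem swapCoeff_add_left (i : ZMod m) (s s' t : ℕ) :
    swapCoeff q i (s + s') t = swapCoeff q i s t * swapCoeff q (i + s) s' t := by
  simp only [swapCoeff_comm q _ _ t, swapCoeff_add_right]

variable {q} in
theorem swapCoeff_ne_zero (hq : ∀ i, q i ≠ 0) (i : ZMod m) (s t : ℕ) : swapCoeff q i s t ≠ 0 := by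
  simp [swapCoeff, Finset.prod_ne_zero_iff, hq]

end SwapCoeff

section MonomialEnd

variable (q : ZMod m → K)

/-- Left multiplication by `γ_i^s δ_{i+s-t}^t` on the free module with basis the monomials
`γ_j^s' δ_{j+s'-t'}^t'`, indexed by the triples `(j, s', t')`. -/
def monomialEnd (i : ZMod m) (s t : ℕ) : Module.End K (ZMod m × ℕ × ℕ →₀ K) :=
  Finsupp.linearCombination K fun p =>
    if p.1 = i + s - t then Finsupp.single (i, s + p.2.1, t + p.2.2) (swapCoeff q p.1 p.2.1 t)
    else 0

theorem monomialEnd_single (i j : ZMod m) (s t s' t' : ℕ) (c : K) :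
    monomialEnd q i s t (Finsupp.single (j, s', t') c) =
      if j = i + s - t then Finsupp.single (i, s + s', t + t') (c * swapCoeff q j s' t) else 0 := by
  simp [monomialEnd]

theorem monomialEnd_mul_monomialEnd (i j : ZMod m) (s t s' t' : ℕ) :
    monomialEnd q i s t * monomialEnd q j s' t' =
      if j = i + s - t then swapCoeff q j s' t • monomialEnd q i (s + s') (t + t') else 0 := by
  refine Finsupp.basisSingleOne.ext fun ⟨k, s'', t''⟩ => ?_
  rw [Finsupp.coe_basisSingleOne, Module.End.mul_apply, monomialEnd_single]
  by_cases hj : j = i + s - t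
  · have htgt : i + (s + s' : ℕ) - (t + t' : ℕ) = j + s' - t' := by rw [hj]; push_cast; ring
    rw [if_pos hj, LinearMap.smul_apply, monomialEnd_single, htgt]
    by_cases hk : k = j + s' - t'
    · have cocycle : swapCoeff q k s'' t' * swapCoeff q j (s' + s'') t =
          swapCoeff q j s' t * swapCoeff q k s'' (t + t') := by
        have hswap : k + t' = j + s' := by rw [hk, sub_add_cancel]
        rw [swapCoeff_add_left, add_comm t, swapCoeff_add_right, hswap]
        ring
      rw [if_pos hk, if_pos hk, monomialEnd_single, if_pos hj, one_mul, one_mul, cocycle,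
        Finsupp.smul_single, smul_eq_mul, add_assoc, add_assoc]
    · rw [if_neg hk, if_neg hk, map_zero, smul_zero]
  · rw [if_neg hj, LinearMap.zero_apply]
    split_ifs
    · rw [monomialEnd_single, if_neg hj]
    · exact map_zero _

/-- The images of the generators of `E(Λ_q)` under the left regular representation. -/
def generatorEnd : Gen m → Module.End K (ZMod m × ℕ × ℕ →₀ K)
  | .e i => monomialEnd q i 0 0
  | .a i => monomialEnd q i 1 0
  | .abar i => monomialEnd q (i + 1) 0 1

theorem generatorEnd_extRel (i : ZMod m) :
    (q i)⁻¹ • (generatorEnd q (.a i) * generatorEnd q (.abar i)) +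
      generatorEnd q (.abar (i - 1)) * generatorEnd q (.a (i - 1)) = 0 := by
  simp [generatorEnd, monomialEnd_mul_monomialEnd, swapCoeff_one_one, ← add_smul]

end MonomialEnd

variable [NeZero m]

section Presentation

variable (q : ZMod m → K)

local notation "ε" => xe K m q
local notation "α" => xa K m q
local notation "β" => xb K m q
local notation "γ" => gam K m q
local notation "δ" => del K m q

theorem mkAlgHom_eq_of_pathRel {x y : FA K m} (h : PathRel K m x y) :
    RingQuot.mkAlgHom K (ExtRel K m q) (RingQuot.mkAlgHom K (PathRel K m) x) =
      RingQuot.mkAlgHom K (ExtRel K m q) (RingQuot.mkAlgHom K (PathRel K m) y) := by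
  rw [RingQuot.mkAlgHom_rel K h]

theorem xe_mul_xe_of_ne {i j : ZMod m} (h : i ≠ j) : ε i * ε j = 0 := by
  simpa [xe, pe] using mkAlgHom_eq_of_pathRel q (.orth i j h)

theorem xe_mul_xe_self (i : ZMod m) : ε i * ε i = ε i := by
  simpa [xe, pe] using mkAlgHom_eq_of_pathRel q (.idem i)

theorem sum_xe : ∑ i, ε i = 1 := by
  simpa [xe, pe] using mkAlgHom_eq_of_pathRel q .total

theorem xe_mul_xa (i : ZMod m) : ε i * α i = α i := by
  simpa [xe, pe, xa, pa] using mkAlgHom_eq_of_pathRel q (.asrc i)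

theorem xa_mul_xe (i : ZMod m) : α i * ε (i + 1) = α i := by
  simpa [xe, pe, xa, pa] using mkAlgHom_eq_of_pathRel q (.atgt i)

theorem xe_mul_xb (i : ZMod m) : ε (i + 1) * β i = β i := by
  simpa [xe, pe, xb, pb] using mkAlgHom_eq_of_pathRel q (.bsrc i)

theorem xb_mul_xe (i : ZMod m) : β i * ε i = β i := by
  simpa [xe, pe, xb, pb] using mkAlgHom_eq_of_pathRel q (.btgt i)

theorem xb_mul_xa (i : ZMod m) : β i * α i = -(q (i + 1))⁻¹ • (α (i + 1) * β (i + 1)) := by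
  have hrel := RingQuot.mkAlgHom_rel K (ExtRel.rel (q := q) (i + 1))
  rw [map_add, map_smul, map_mul, map_mul, map_zero, add_sub_cancel_right] at hrel
  exact (eq_neg_of_add_eq_zero_right hrel).trans (neg_smul _ _).symm

variable {q} in
theorem eq_top_of_generators_mem {S : Subalgebra K (ExtAlg K m q)} (he : ∀ i, ε i ∈ S)
    (ha : ∀ i, α i ∈ S) (hb : ∀ i, β i ∈ S) : S = ⊤ := by
  refine eq_top_iff.mpr fun z _ => ?_
  obtain ⟨y, rfl⟩ := RingQuot.mkAlgHom_surjective K _ z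
  obtain ⟨x, rfl⟩ := RingQuot.mkAlgHom_surjective K _ y
  induction x using FreeAlgebra.induction with
  | grade0 r => simp
  | grade1 g =>
    cases g with
    | e i => exact he i
    | a i => exact ha i
    | abar i => exact hb i
  | mul x y hx hy => simpa only [map_mul] using mul_mem (hx trivial) (hy trivial)
  | add x y hx hy => simpa only [map_add] using add_mem (hx trivial) (hy trivial)

/-- The universal property of `E(Λ_q)`: a map on generators satisfying the relations of the path
algebra and those of `E(Λ_q)` extends to `E(Λ_q)`. -/
def lift {A : Type*} [Ring A] [Algebra K A] (f : Gen m → A)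
    (hpath : ∀ ⦃x y⦄, PathRel K m x y → FreeAlgebra.lift K f x = FreeAlgebra.lift K f y)
    (hext : ∀ i, (q i)⁻¹ • (f (.a i) * f (.abar i)) + f (.abar (i - 1)) * f (.a (i - 1)) = 0) :
    ExtAlg K m q →ₐ[K] A :=
  RingQuot.liftAlgHom K ⟨RingQuot.liftAlgHom K ⟨FreeAlgebra.lift K f, hpath⟩, by
    rintro _ _ ⟨i⟩
    simpa [pa, pb, Aa, Bb] using hext i⟩

section Lift

variable {q} {A : Type*} [Ring A] [Algebra K A] {f : Gen m → A}
  (hpath : ∀ ⦃x y⦄, PathRel K m x y → FreeAlgebra.lift K f x = FreeAlgebra.lift K f y)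
  (hext : ∀ i, (q i)⁻¹ • (f (.a i) * f (.abar i)) + f (.abar (i - 1)) * f (.a (i - 1)) = 0)

@[simp]
theorem lift_xe (i : ZMod m) : lift q f hpath hext (ε i) = f (.e i) := by
  simp [lift, xe, pe, Ee]

@[simp]
theorem lift_xa (i : ZMod m) : lift q f hpath hext (α i) = f (.a i) := by
  simp [lift, xa, pa, Aa]

@[simp]
theorem lift_xb (i : ZMod m) : lift q f hpath hext (β i) = f (.abar i) := by
  simp [lift, xb, pb, Bb]

end Lift

theorem xe_mul_gam (i : ZMod m) (s : ℕ) : ε i * γ i s = γ i s := by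
  cases s with
  | zero => exact xe_mul_xe_self q i
  | succ s => rw [gam, ← mul_assoc, xe_mul_xa]

theorem gam_mul_gam (i : ZMod m) (s s' : ℕ) : γ i s * γ (i + s) s' = γ i (s + s') := by
  induction s generalizing i with
  | zero => simp [gam, xe_mul_gam]
  | succ s ih =>
    rw [Nat.cast_succ, add_comm (s : ZMod m), ← add_assoc, gam, mul_assoc, ih, Nat.succ_add, gam]

theorem xe_mul_del (i : ZMod m) (t : ℕ) : ε (i + t) * δ i t = δ i t := by
  cases t with
  | zero => simpa [del] using xe_mul_xe_self q i
  | succ t => rw [del, ← mul_assoc, Nat.cast_succ, ← add_assoc, xe_mul_xb]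

theorem del_mul_del (i : ZMod m) (t t' : ℕ) : δ (i + t') t * δ i t' = δ i (t + t') := by
  induction t with
  | zero => simp [del, xe_mul_del]
  | succ t ih =>
    rw [del, mul_assoc, ih, Nat.succ_add, del]
    congr 2
    push_cast
    ring

theorem del_mul_xe (i : ZMod m) (t : ℕ) : δ i t * ε i = δ i t := by
  simpa [del] using del_mul_del q i t 0

theorem gam_mul_xe (i : ZMod m) (s : ℕ) : γ i s * ε (i + s) = γ i s :=
  gam_mul_gam q i s 0

theorem xb_mul_gam (i : ZMod m) (s : ℕ) :
    β i * γ i s = swapCoeff q i s 1 • (γ (i + 1) s * β (i + s)) := by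
  induction s generalizing i with
  | zero => simp [gam, xb_mul_xe, xe_mul_xb]
  | succ s ih =>
    have hcoeff : swapCoeff q i (s + 1) 1 = -(q (i + 1))⁻¹ * swapCoeff q (i + 1) s 1 := by
      rw [add_comm, swapCoeff_add_left, swapCoeff_one_one, Nat.cast_one]
    rw [gam, ← mul_assoc, xb_mul_xa, smul_mul_assoc, mul_assoc, ih, mul_smul_comm, smul_smul,
      ← mul_assoc, ← gam, hcoeff, Nat.cast_succ, add_comm (s : ZMod m), add_assoc i 1]

theorem del_mul_gam (i : ZMod m) (s t : ℕ) :
    δ i t * γ i s = swapCoeff q i s t • (γ (i + t) s * δ (i + s) t) := by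
  induction t with
  | zero => simp [del, xe_mul_gam, gam_mul_xe]
  | succ t ih =>
    rw [del, mul_assoc, ih, mul_smul_comm, ← mul_assoc, xb_mul_gam, smul_mul_assoc, smul_smul,
      mul_assoc, swapCoeff_add_right, del, add_right_comm i (s : ZMod m), Nat.cast_succ,
      add_assoc i (t : ZMod m) 1]

end Presentation

section MonomialBasis

variable (q : ZMod m → K)

/-- The path `γ_i^s δ_{i+s-t}^t` from vertex `i` to vertex `i + s - t`: `s` arrows `a` followed by
`t` arrows `ā`. -/
def monomial (i : ZMod m) (s t : ℕ) : ExtAlg K m q :=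
  gam K m q i s * del K m q (i + s - t) t

@[simp]
theorem monomial_zero_zero (i : ZMod m) : monomial q i 0 0 = xe K m q i := by
  simp [monomial, gam, del, xe_mul_xe_self]

theorem monomial_one_zero (i : ZMod m) : monomial q i 1 0 = xa K m q i := by
  simp [monomial, gam, del, xa_mul_xe]

theorem monomial_zero_one (i : ZMod m) : monomial q (i + 1) 0 1 = xb K m q i := by
  simp [monomial, gam, del, xb_mul_xe, xe_mul_xb]

theorem gam_mul_del (i j : ZMod m) (s t : ℕ) :
    gam K m q i s * del K m q j t = if j + t = i + s then monomial q i s t else 0 := by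
  split_ifs with h
  · rw [monomial, ← h, add_sub_cancel_right]
  · rw [← gam_mul_xe, ← xe_mul_del, mul_assoc, ← mul_assoc (xe K m q _),
      xe_mul_xe_of_ne q (Ne.symm h), zero_mul, mul_zero]

theorem del_mul_gam_of_ne {i j : ZMod m} (h : i ≠ j) (s t : ℕ) :
    del K m q i t * gam K m q j s = 0 := by
  rw [← del_mul_xe, ← xe_mul_gam, mul_assoc, ← mul_assoc (xe K m q i), xe_mul_xe_of_ne q h,
    zero_mul, mul_zero]

theorem monomial_mul_monomial (i j : ZMod m) (s t s' t' : ℕ) :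
    monomial q i s t * monomial q j s' t' =
      if j = i + s - t then swapCoeff q j s' t • monomial q i (s + s') (t + t') else 0 := by
  split_ifs with h
  · have hsrc : j + t = i + s := by rw [h, sub_add_cancel]
    have hdel : j + s' = j + s' - t' + t' := (sub_add_cancel _ _).symm
    have htgt : i + (s + s' : ℕ) - (t + t' : ℕ) = j + s' - t' := by rw [h]; push_cast; ring
    calc monomial q i s t * monomial q j s' t'
        = gam K m q i s * (del K m q j t * gam K m q j s') * del K m q (j + s' - t') t' := by
          simp only [monomial, ← h, mul_assoc]
      _ = swapCoeff q j s' t • ((gam K m q i s * gam K m q (i + s) s') *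
            (del K m q (j + s' - t' + t') t * del K m q (j + s' - t') t')) := by
          rw [del_mul_gam, hsrc, ← hdel]
          simp only [mul_smul_comm, smul_mul_assoc, mul_assoc]
      _ = swapCoeff q j s' t • monomial q i (s + s') (t + t') := by
          rw [gam_mul_gam, del_mul_del, monomial, htgt]
  · rw [monomial, monomial, mul_assoc, ← mul_assoc (del K m q _ t),
      del_mul_gam_of_ne q (Ne.symm h), zero_mul, mul_zero]

theorem span_range_monomial :
    Submodule.span K (Set.range fun p : ZMod m × ℕ × ℕ => monomial q p.1 p.2.1 p.2.2) = ⊤ := by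
  set M := Submodule.span K (Set.range fun p : ZMod m × ℕ × ℕ => monomial q p.1 p.2.1 p.2.2)
  have mem (i : ZMod m) (s t : ℕ) : monomial q i s t ∈ M := Submodule.subset_span ⟨(i, s, t), rfl⟩
  have hone : 1 ∈ M := by
    rw [← sum_xe q]
    exact Submodule.sum_mem _ fun i _ => monomial_zero_zero q i ▸ mem i 0 0
  have hmul : M * M ≤ M := by
    rw [Submodule.span_mul_span, Submodule.span_le]
    rintro _ ⟨_, ⟨p, rfl⟩, _, ⟨p', rfl⟩, rfl⟩
    simp only [monomial_mul_monomial]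
    split_ifs
    exacts [M.smul_mem _ (mem _ _ _), M.zero_mem]
  have htop : M.toSubalgebra hone (fun x y hx hy => hmul (Submodule.mul_mem_mul hx hy)) = ⊤ :=
    eq_top_of_generators_mem (fun i => monomial_zero_zero q i ▸ mem i 0 0)
      (fun i => monomial_one_zero q i ▸ mem i 1 0)
      (fun i => monomial_zero_one q i ▸ mem (i + 1) 0 1)
  simpa using congrArg Subalgebra.toSubmodule htop

theorem sum_monomialEnd_zero_zero : ∑ i, monomialEnd q i 0 0 = 1 := by
  refine Finsupp.basisSingleOne.ext fun ⟨k, s'', t''⟩ => ?_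
  simp [monomialEnd_single]

theorem lift_generatorEnd_eq_of_pathRel ⦃x y : FA K m⦄ (h : PathRel K m x y) :
    FreeAlgebra.lift K (generatorEnd q) x = FreeAlgebra.lift K (generatorEnd q) y := by
  induction h with
  | orth i j hij =>
    simp [Ee, generatorEnd, monomialEnd_mul_monomialEnd, hij.symm]
  | total => simp [Ee, generatorEnd, sum_monomialEnd_zero_zero]
  | _ => simp [Ee, Aa, Bb, generatorEnd, monomialEnd_mul_monomialEnd]

/-- The left regular representation of `E(Λ_q)`, written in coordinates with respect to the
monomials. -/
def regularRep : ExtAlg K m q →ₐ[K] Module.End K (ZMod m × ℕ × ℕ →₀ K) :=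
  lift q (generatorEnd q) (lift_generatorEnd_eq_of_pathRel q) (generatorEnd_extRel q)

theorem regularRep_gam (i : ZMod m) (s : ℕ) :
    regularRep q (gam K m q i s) = monomialEnd q i s 0 := by
  induction s generalizing i with
  | zero => simp [regularRep, gam, generatorEnd]
  | succ s ih =>
    rw [gam, map_mul, ih]
    simp [regularRep, generatorEnd, monomialEnd_mul_monomialEnd, add_comm]

theorem regularRep_del (i : ZMod m) (t : ℕ) :
    regularRep q (del K m q i t) = monomialEnd q (i + t) 0 t := by
  induction t with
  | zero => simp [regularRep, del, generatorEnd]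
  | succ t ih =>
    rw [del, map_mul, ih, Nat.cast_succ, ← add_assoc, add_comm t 1]
    simp [regularRep, generatorEnd, monomialEnd_mul_monomialEnd]

theorem regularRep_monomial (i : ZMod m) (s t : ℕ) :
    regularRep q (monomial q i s t) = monomialEnd q i s t := by
  rw [monomial, map_mul, regularRep_gam, regularRep_del, monomialEnd_mul_monomialEnd]
  simp

theorem linearIndependent_monomial :
    LinearIndependent K fun p : ZMod m × ℕ × ℕ => monomial q p.1 p.2.1 p.2.2 := by
  let one : ZMod m × ℕ × ℕ →₀ K := ∑ i, Finsupp.single (i, 0, 0) 1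
  refine LinearIndependent.of_comp (LinearMap.applyₗ one ∘ₗ (regularRep q).toLinearMap) ?_
  convert (Finsupp.basisSingleOne (R := K) (ι := ZMod m × ℕ × ℕ)).linearIndependent using 1
  ext1 ⟨i, s, t⟩
  simp [one, -map_sum, map_sum (monomialEnd q i s t), regularRep_monomial, monomialEnd_single]

/-- The `K`-basis of `E(Λ_q)` formed by the monomials `γ_i^s δ_{i+s-t}^t`. -/
def monomialBasis : Module.Basis (ZMod m × ℕ × ℕ) K (ExtAlg K m q) :=
  .mk (linearIndependent_monomial q) (span_range_monomial q).ge

@[simp]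
theorem monomialBasis_apply (i : ZMod m) (s t : ℕ) :
    monomialBasis q (i, s, t) = monomial q i s t := by
  simp [monomialBasis]

@[simp]
theorem monomialBasis_repr_monomial (i : ZMod m) (s t : ℕ) :
    (monomialBasis q).repr (monomial q i s t) = Finsupp.single (i, s, t) 1 := by
  rw [← monomialBasis_apply, Module.Basis.repr_self]

end MonomialBasis

section GradedCommutativity

variable {q : ZMod m → K}

theorem repr_mul_monomial (z : ExtAlg K m q) (i j : ZMod m) (s t s' t' : ℕ) :
    (monomialBasis q).repr (z * monomial q j s' t') (i, s + s', t + t') =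
      (if j = i + s - t then swapCoeff q j s' t else 0) * (monomialBasis q).repr z (i, s, t) := by
  have hcoord : (monomialBasis q).coord (i, s + s', t + t') ∘ₗ
      LinearMap.mulRight K (monomial q j s' t') =
      (if j = i + s - t then swapCoeff q j s' t else 0) • (monomialBasis q).coord (i, s, t) := by
    refine (monomialBasis q).ext fun ⟨k, a, b⟩ => ?_
    by_cases hk : (k, a, b) = (i, s, t)
    · cases hk
      by_cases hj : j = i + s - t <;> simp [monomial_mul_monomial, hj]
    · have hk' : (k, a + s', b + t') ≠ (i, s + s', t + t') := by simpa using hk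
      by_cases hj : j = k + a - b <;>
        simp [monomial_mul_monomial, hj, Finsupp.single_eq_of_ne' hk, Finsupp.single_eq_of_ne' hk',
          -ite_smul]
  exact LinearMap.congr_fun hcoord z

theorem repr_monomial_mul (z : ExtAlg K m q) (i : ZMod m) (s t s' t' : ℕ) :
    (monomialBasis q).repr (monomial q i s t * z) (i, s + s', t + t') =
      swapCoeff q (i + s - t) s' t * (monomialBasis q).repr z (i + s - t, s', t') := by
  have hcoord : (monomialBasis q).coord (i, s + s', t + t') ∘ₗ
      LinearMap.mulLeft K (monomial q i s t) =
      swapCoeff q (i + s - t) s' t • (monomialBasis q).coord (i + s - t, s', t') := by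
    refine (monomialBasis q).ext fun ⟨k, a, b⟩ => ?_
    by_cases hk : (k, a, b) = (i + s - t, s', t')
    · cases hk
      simp [monomial_mul_monomial]
    · by_cases hsrc : k = i + s - t
      · have hk' : (i, s + a, t + b) ≠ (i, s + s', t + t') := by simpa [hsrc] using hk
        subst hsrc
        simp [monomial_mul_monomial, Finsupp.single_eq_of_ne' hk, Finsupp.single_eq_of_ne' hk']
      · simp [monomial_mul_monomial, hsrc]
  exact LinearMap.congr_fun hcoord z

theorem homog_monomial (i : ZMod m) (s t : ℕ) : Homog K m q (s + t) (monomial q i s t) :=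
  Submodule.subset_span ⟨i, _, s, t, rfl, rfl⟩

theorem add_eq_of_homog {n : ℕ} {z : ExtAlg K m q} (hz : Homog K m q n z) {i : ZMod m} {s t : ℕ}
    (h : (monomialBasis q).repr z (i, s, t) ≠ 0) : s + t = n := by
  have hspan : z ∈ Submodule.span K (monomialBasis q '' {p | p.2.1 + p.2.2 = n}) := by
    refine Submodule.span_le.mpr ?_ hz
    rintro _ ⟨i, j, s, t, hst, rfl⟩
    rw [gam_mul_del]
    split_ifs
    · exact Submodule.subset_span ⟨(i, s, t), hst, monomialBasis_apply q i s t⟩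
    · exact Submodule.zero_mem _
  exact (monomialBasis q).mem_span_image.mp hspan (Finsupp.mem_support_iff.mpr h)

theorem target_eq_source_of_commute_xe {z : ExtAlg K m q} {i : ZMod m}
    (hcomm : Commute z (xe K m q i)) {s t : ℕ} (h : (monomialBasis q).repr z (i, s, t) ≠ 0) :
    i + s - t = i := by
  by_contra hne
  have hright := repr_mul_monomial z i i s t 0 0
  have hleft := repr_monomial_mul z i 0 0 s t
  simp only [monomial_zero_zero, if_neg (Ne.symm hne), add_zero, zero_mul] at hright
  simp only [monomial_zero_zero, ← hcomm.eq, swapCoeff_zero_right, zero_add, one_mul,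
    Nat.cast_zero, add_zero, sub_zero] at hleft
  exact h (hleft.symm.trans hright)

theorem eq_zero_of_gradedCentral_of_odd (hq : ∀ i, q i ≠ 0) (h2 : (2 : K) ≠ 0) {n : ℕ}
    (hn : Odd n) {z : ExtAlg K m q} (hz : Homog K m q n z)
    (hcentral : ∀ (n' : ℕ) (g : ExtAlg K m q), Homog K m q n' g →
      z * g = ((-1 : K) ^ (n * n')) • (g * z)) : z = 0 := by
  refine (monomialBasis q).ext_elem fun ⟨i, s, t⟩ => ?_
  rw [map_zero, Finsupp.zero_apply]
  by_contra hcoeff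
  have hcomm : Commute z (xe K m q i) := by
    have hdeg := hcentral _ _ (homog_monomial i 0 0)
    rwa [monomial_zero_zero, add_zero, mul_zero, pow_zero, one_smul] at hdeg
  have hclosed : i + s - t = i := target_eq_source_of_commute_xe hcomm hcoeff
  have hanti : z * monomial q i s t = (-1 : K) • (monomial q i s t * z) := by
    rw [hcentral _ _ (homog_monomial i s t), add_eq_of_homog hz hcoeff, (hn.mul hn).neg_one_pow]
  have hright := repr_mul_monomial z i i s t s t
  have hleft := repr_monomial_mul z i s t s t
  rw [hclosed] at hleft
  rw [if_pos hclosed.symm, hanti, map_smul, Finsupp.smul_apply, hleft, neg_one_smul,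
    neg_eq_iff_add_eq_zero, ← two_mul] at hright
  exact mul_ne_zero h2 (mul_ne_zero (swapCoeff_ne_zero hq i s t) hcoeff) hright

theorem isMulCommutative_ZGr (hq : ∀ i, q i ≠ 0) : IsMulCommutative (ZGr K m q) := by
  refine Algebra.isMulCommutative_adjoin K ?_
  rintro z ⟨n, hz, hcentral⟩ w ⟨n', hw, -⟩
  by_cases h2 : (2 : K) = 0
  · have hneg : (-1 : K) = 1 := by linear_combination -h2
    simpa [hneg] using hcentral n' w hw
  · rcases n.even_or_odd with hn | hn
    · simpa [(hn.mul_right n').neg_one_pow] using hcentral n' w hw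
    · simp [eq_zero_of_gradedCentral_of_odd hq h2 hn hz hcentral]

end GradedCommutativity

section CentralPeriods

theorem prod_range_mul_add_cast {M : Type*} [CommMonoid M] (g : ZMod m → M) (j : ZMod m) (k : ℕ) :
    ∏ l ∈ Finset.range (m * k), g (j + l) = (∏ i, g i) ^ k := by
  induction k with
  | zero => simp
  | succ k ih =>
    have hblock : ∏ l ∈ Finset.range m, g (j + (m * k + l : ℕ)) = ∏ i, g i :=
      Finset.prod_nbij' (fun l => j + l) (fun i => (i - j).val) (by simp)
        (by simp [ZMod.val_lt]) (by simpa using fun l => ZMod.val_cast_of_lt) (by simp) (by simp)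
    rw [Nat.mul_succ, Finset.prod_range_add, ih, hblock, pow_succ]

variable (q : ZMod m → K)

/-- The even multiples `N` of `m` for which `δ^N`, and hence by symmetry of `swapCoeff` also `γ^N`,
commutes past every path without a scalar. -/
def centralPeriods : AddSubmonoid ℕ where
  carrier := {N | Even N ∧ (N : ZMod m) = 0 ∧ ∀ i s, swapCoeff q i s N = 1}
  zero_mem' := by simp
  add_mem' := by
    rintro N N' ⟨heven, hcast, hswap⟩ ⟨heven', hcast', hswap'⟩
    exact ⟨heven.add heven', by simp [hcast, hcast'],
      fun i s => by rw [swapCoeff_add_right, hswap, hswap', one_mul]⟩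

variable {q}

theorem mul_two_mul_mem_centralPeriods {n : ℕ} (h : (∏ i, q i) ^ n = 1) :
    m * (2 * n) ∈ centralPeriods q := by
  refine ⟨(even_two_mul n).mul_left m, by simp, fun i s => ?_⟩
  have hprod : (∏ i, -(q i)⁻¹) ^ (2 * n) = 1 := by
    rw [Finset.prod_neg, Finset.prod_inv_distrib, mul_pow, ← pow_mul,
      ((even_two_mul n).mul_left _).neg_one_pow, one_mul, inv_pow, mul_comm 2 n, pow_mul, h,
      one_pow, inv_one]
  rw [swapCoeff_comm, swapCoeff]
  refine Finset.prod_eq_one fun k _ => ?_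
  rw [prod_range_mul_add_cast (fun i => -(q i)⁻¹), hprod]

end CentralPeriods

section CycleSum

variable (q : ZMod m → K)

/-- The sum over all vertices `i` of the paths `γ_i^u δ_{i+u-v}^v`. -/
def cycleSum (u v : ℕ) : ExtAlg K m q :=
  ∑ i, monomial q i u v

theorem cycleSum_zero_zero : cycleSum q 0 0 = 1 := by
  simp only [cycleSum, monomial_zero_zero, sum_xe]

theorem homog_cycleSum (u v : ℕ) : Homog K m q (u + v) (cycleSum q u v) :=
  Submodule.sum_mem _ fun i _ => homog_monomial i u v

variable {q} {u v : ℕ}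

theorem cycleSum_mul_monomial (hu : u ∈ centralPeriods q) (hv : v ∈ centralPeriods q)
    (j : ZMod m) (s t : ℕ) :
    cycleSum q u v * monomial q j s t = monomial q j (u + s) (v + t) := by
  simp [cycleSum, Finset.sum_mul, monomial_mul_monomial, hu.2.1, hv.2.1, hv.2.2]

theorem monomial_mul_cycleSum (hu : u ∈ centralPeriods q) (j : ZMod m) (s t : ℕ) :
    monomial q j s t * cycleSum q u v = monomial q j (s + u) (t + v) := by
  simp [cycleSum, Finset.mul_sum, monomial_mul_monomial, swapCoeff_comm q _ u, hu.2.2]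

theorem commute_cycleSum (hu : u ∈ centralPeriods q) (hv : v ∈ centralPeriods q)
    (z : ExtAlg K m q) : Commute (cycleSum q u v) z := by
  have hcomm : LinearMap.mulLeft K (cycleSum q u v) = LinearMap.mulRight K (cycleSum q u v) := by
    refine (monomialBasis q).ext fun ⟨i, s, t⟩ => ?_
    simp [cycleSum_mul_monomial hu hv, monomial_mul_cycleSum hu, add_comm]
  exact LinearMap.congr_fun hcomm z

theorem cycleSum_mem_ZGr (hu : u ∈ centralPeriods q) (hv : v ∈ centralPeriods q) :
    cycleSum q u v ∈ ZGr K m q := by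
  refine Algebra.subset_adjoin ⟨u + v, homog_cycleSum q u v, fun n' g _ => ?_⟩
  rw [((hu.1.add hv.1).mul_right n').neg_one_pow, one_smul, (commute_cycleSum hu hv g).eq]

theorem cycleSum_mul_cycleSum (hu : u ∈ centralPeriods q) (hv : v ∈ centralPeriods q)
    (u' v' : ℕ) :
    cycleSum q u v * cycleSum q u' v' = cycleSum q (u + u') (v + v') := by
  calc cycleSum q u v * cycleSum q u' v' = ∑ i, cycleSum q u v * monomial q i u' v' :=
        Finset.mul_sum _ _ _
    _ = cycleSum q (u + u') (v + v') :=
        Finset.sum_congr rfl fun i _ => cycleSum_mul_monomial hu hv i u' v'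

theorem cycleSum_pow (hu : u ∈ centralPeriods q) (hv : v ∈ centralPeriods q) (k : ℕ) :
    cycleSum q u v ^ k = cycleSum q (k * u) (k * v) := by
  induction k with
  | zero => simp [cycleSum_zero_zero]
  | succ k ih => rw [pow_succ', ih, cycleSum_mul_cycleSum hu hv, Nat.succ_mul, Nat.succ_mul,
      add_comm u, add_comm v]

variable (q) in
theorem linearIndependent_cycleSum :
    LinearIndependent K fun p : centralPeriods q × centralPeriods q => cycleSum q p.1 p.2 := by
  refine .of_comp (LinearMap.mulLeft K (xe K m q 0)) ?_
  have hmul : LinearMap.mulLeft K (xe K m q 0) ∘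
      (fun p : centralPeriods q × centralPeriods q => cycleSum q p.1 p.2) =
      fun p => monomial q 0 p.1 p.2 := by
    ext1 p
    rw [Function.comp_apply, LinearMap.mulLeft_apply, ← monomial_zero_zero,
      monomial_mul_cycleSum p.1.2, zero_add, zero_add]
  let index (p : centralPeriods q × centralPeriods q) : ZMod m × ℕ × ℕ := (0, p.1, p.2)
  have hinj : Function.Injective index := by
    rintro ⟨⟨u, _⟩, v, _⟩ ⟨⟨u', _⟩, v', _⟩ h
    simpa [index] using h
  rw [hmul]
  exact (linearIndependent_monomial q).comp index hinj

end CycleSum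

section PolynomialSubring

variable {q : ZMod m → K} {N : ℕ} (hN : N ∈ centralPeriods q)

/-- The central elements `∑ i, γ_i^N` and `∑ i, δ_i^N`, which generate a polynomial ring over
which `E(Λ_q)` is finite. -/
def centralGenerators : Fin 2 → ZGr K m q :=
  ![⟨cycleSum q N 0, cycleSum_mem_ZGr hN (zero_mem _)⟩,
    ⟨cycleSum q 0 N, cycleSum_mem_ZGr (zero_mem _) hN⟩]

-- Without this shortcut, instance search finds no ring structure on subalgebras of `ExtAlg K m q`.
instance instRing : Ring (ExtAlg K m q) :=
  RingQuot.instRing (ExtRel K m q)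

open scoped IsMulCommutative

variable [IsMulCommutative (ZGr K m q)]

theorem coe_prod_centralGenerators_pow (d : Fin 2 → ℕ) :
    ((∏ i, centralGenerators hN i ^ d i : ZGr K m q) : ExtAlg K m q) =
      cycleSum q (d 0 * N) (d 1 * N) := by
  have hzero : 0 ∈ centralPeriods q := zero_mem _
  have hpow : d 0 * N ∈ centralPeriods q := nsmul_mem hN (d 0)
  have hX : cycleSum q N 0 ^ d 0 = cycleSum q (d 0 * N) 0 := cycleSum_pow hN hzero _
  have hY : cycleSum q 0 N ^ d 1 = cycleSum q 0 (d 1 * N) := cycleSum_pow hzero hN _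
  have hXY := cycleSum_mul_cycleSum hpow hzero 0 (d 1 * N)
  rw [add_zero, zero_add] at hXY
  rw [Fin.prod_univ_two, ← hXY, ← hX, ← hY]
  rfl

theorem algebraicIndependent_centralGenerators (hpos : 0 < N) :
    AlgebraicIndependent K (centralGenerators hN) := by
  let exponents (d : Fin 2 →₀ ℕ) : centralPeriods q × centralPeriods q :=
    (d 0 • ⟨N, hN⟩, d 1 • ⟨N, hN⟩)
  have hinj : Function.Injective exponents := by
    intro d d' h
    ext i
    fin_cases i <;> simp_all [exponents, Subtype.ext_iff, hpos.ne']
  have hmon : (ZGr K m q).val.toLinearMap ∘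
      (fun d : Fin 2 →₀ ℕ => d.prod fun i k => centralGenerators hN i ^ k) =
      fun d => cycleSum q (exponents d).1 (exponents d).2 := by
    ext1 d
    rw [Function.comp_apply, Finsupp.prod_fintype _ _ fun i => pow_zero _]
    exact coe_prod_centralGenerators_pow hN d
  refine algebraicIndependent_of_linearIndependent_monomials
    (.of_comp (ZGr K m q).val.toLinearMap ?_)
  rw [hmon]
  exact (linearIndependent_cycleSum q).comp exponents hinj

theorem exists_smul_monomial_mod_eq (i : ZMod m) (s t : ℕ) :
    ∃ c : Algebra.adjoin K (Set.range (centralGenerators hN)),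
      c • monomial q i (s % N) (t % N) = monomial q i s t := by
  let c : ZGr K m q := ∏ k, centralGenerators hN k ^ ![s / N, t / N] k
  have hc : c ∈ Algebra.adjoin K (Set.range (centralGenerators hN)) :=
    prod_mem fun k _ => pow_mem (Algebra.subset_adjoin (Set.mem_range_self k)) _
  have hdiv := cycleSum_mul_monomial (nsmul_mem hN (s / N)) (nsmul_mem hN (t / N))
    i (s % N) (t % N)
  rw [smul_eq_mul, smul_eq_mul, Nat.div_add_mod', Nat.div_add_mod'] at hdiv
  exact ⟨⟨c, hc⟩, (congrArg (· * _) (coe_prod_centralGenerators_pow hN _)).trans hdiv⟩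

theorem finite_adjoin_centralGenerators (hpos : 0 < N) :
    Module.Finite (Algebra.adjoin K (Set.range (centralGenerators hN))) (ExtAlg K m q) := by
  let S := Algebra.adjoin K (Set.range (centralGenerators hN))
  let reduced (p : ZMod m × Fin N × Fin N) : ExtAlg K m q := monomial q p.1 p.2.1 p.2.2
  have mem (p : ZMod m × ℕ × ℕ) :
      monomialBasis q p ∈ Submodule.span S (Set.range reduced) := by
    obtain ⟨i, s, t⟩ := p
    obtain ⟨c, hc⟩ := exists_smul_monomial_mod_eq hN i s t
    rw [monomialBasis_apply, ← hc]
    exact Submodule.smul_mem _ _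
      (Submodule.subset_span ⟨(i, ⟨s % N, s.mod_lt hpos⟩, ⟨t % N, t.mod_lt hpos⟩), rfl⟩)
  have : IsScalarTower K S (ExtAlg K m q) := ⟨fun a c z => smul_mul_assoc a (c : ZGr K m q).1 z⟩
  have hle : Submodule.span K (Set.range (monomialBasis q)) ≤
      (Submodule.span S (Set.range reduced)).restrictScalars K :=
    Submodule.span_le.mpr (Set.range_subset_iff.mpr mem)
  rw [(monomialBasis q).span_eq] at hle
  have htop : Submodule.span S (Set.range reduced) = ⊤ := eq_top_iff.mpr fun z _ => hle trivial
  exact .of_fg_top (htop ▸ Submodule.fg_span (Set.finite_range reduced))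

theorem finiteType_ZGr (hN : N ∈ centralPeriods q) (hpos : 0 < N) :
    Algebra.FiniteType K (ZGr K m q) :=
  have := finite_adjoin_centralGenerators hN hpos
  have := finite_adjoin_subalgebra (ZGr K m q) (centralGenerators hN)
  finiteType_of_finite_adjoin (centralGenerators hN)

theorem ringKrullDim_ZGr (hN : N ∈ centralPeriods q) (hpos : 0 < N) :
    ringKrullDim (ZGr K m q) = 2 := by
  have := finite_adjoin_centralGenerators hN hpos
  have := finite_adjoin_subalgebra (ZGr K m q) (centralGenerators hN)
  rw [ringKrullDim_eq_add_natCard_of_finite_adjoin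
    (algebraicIndependent_centralGenerators hN hpos), ringKrullDim_eq_zero_of_field,
    Nat.card_fin, Nat.cast_ofNat, zero_add]

end PolynomialSubring

end ExtAlg

/-- if `ζ = q_0 ⋯ q_{m-1}` is a root of unity, then the graded centre
`Z_gr(E(Λ_q))` (≅ `HH^*(Λ_q)/N`) is a commutative `K`-algebra which is finitely
generated as a `K`-algebra and has Krull dimension 2: it is isomorphic as a `K`-algebra
to a commutative finitely generated `K`-algebra of Krull dimension 2. -/
theorem graded_centre_comm_finite_type_krull_dim_two
    (K : Type) [Field K] (m : ℕ) [NeZero m] (hm : 1 ≤ m)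
    (q : ZMod m → K) (hq : ∀ i, q i ≠ 0)
    (hζ : ∃ n : ℕ, 1 ≤ n ∧ (∏ i : ZMod m, q i) ^ n = 1) :
    (∀ a b : ↥(ZGr K m q), a * b = b * a) ∧
    ∃ (R : Type) (_ : CommRing R) (_ : Algebra K R),
      Nonempty (R ≃ₐ[K] ↥(ZGr K m q)) ∧ Algebra.FiniteType K R ∧ ringKrullDim R = 2 := by
  obtain ⟨n, hn, hroot⟩ := hζ
  have hcomm : IsMulCommutative (ZGr K m q) := ExtAlg.isMulCommutative_ZGr hq
  have hN : m * (2 * n) ∈ ExtAlg.centralPeriods q := ExtAlg.mul_two_mul_mem_centralPeriods hroot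
  have hpos : 0 < m * (2 * n) := by positivity
  exact ⟨hcomm.is_comm.comm, ZGr K m q, IsMulCommutative.instCommRing, inferInstance, ⟨.refl⟩,
    ExtAlg.finiteType_ZGr hN hpos, ExtAlg.ringKrullDim_ZGr hN hpos⟩
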